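/- arXiv:2306.01895 — 3 statements merged into one kernel-verified Lean document; each statement's English description precedes it below -/
import Mathlib

section
/- Let S be a finite nonempty set of points in Euclidean space ℝ^d and let δ ≥ 0. If dist(x, y) ≤ δ for all x, y ∈ S (i.e., S has diameter at most δ), then there exists a point c ∈ ℝ^d such that dist(x, c) ≤ δ/√2 for every x ∈ S. -/
/-!
Lift each `x ∈ S` to `(x, ‖x‖²) ∈ ℝ^d × ℝ` and let `K` be the convex hull of the lifted points. A
point `(c, s)` of `K` records the mean and second moment of a probability measure on `S`, so
`s - ‖c‖²` is its variance. The centre is the mean of a measure of maximal variance `V`, which exists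
because `K` is compact. Moving mass `t` to a point `x ∈ S` changes the variance to
`(1 - t) V + t (1 - t) ‖x - c‖²`, so maximality forces `‖x - c‖² ≤ V`. On the other hand, the
variance is half the mean squared distance of two independent samples, whence `V ≤ δ² / 2`.
-/

open scoped RealInnerProductSpace

section Lift

variable {E : Type*} [NormedAddCommGroup E] [InnerProductSpace ℝ E]

/-- The lift of a point to the paraboloid `{(x, ‖x‖²)}`. -/
def paraboloidLift (x : E) : E × ℝ := (x, ‖x‖ ^ 2)

theorem convex_setOf_lifted_dist_le (c : E) (s r : ℝ) :
    Convex ℝ {q : E × ℝ | q.2 - 2 * ⟪c, q.1⟫ + s ≤ r} := by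
  intro p hp q hq a b ha hb hab
  simp only [Set.mem_ofPred_eq] at hp hq ⊢
  simp only [Prod.fst_add, Prod.snd_add, Prod.smul_fst, Prod.smul_snd, inner_add_right,
    real_inner_smul_right, smul_eq_mul]
  obtain rfl : b = 1 - a := by linarith
  nlinarith [mul_le_mul_of_nonneg_left hp ha, mul_le_mul_of_nonneg_left hq hb]

/-- A measure on a set of diameter at most `δ` has variance at most `δ² / 2`. The expression
`s - 2⟪c, c'⟫ + s'` is the squared distance on lifted points and is affine in each of `(c, s)` and
`(c', s')`, so its bound by `δ²` extends to the hull in each variable in turn. -/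
theorem variance_le_of_mem_convexHull {S : Set E} {δ : ℝ}
    (hdiam : ∀ x ∈ S, ∀ y ∈ S, dist x y ≤ δ) {p : E × ℝ}
    (hp : p ∈ convexHull ℝ (paraboloidLift '' S)) : p.2 - ‖p.1‖ ^ 2 ≤ δ ^ 2 / 2 := by
  have h1 : ∀ x ∈ S, p.2 - 2 * ⟪x, p.1⟫ + ‖x‖ ^ 2 ≤ δ ^ 2 := by
    intro x hx
    refine convexHull_min ?_ (convex_setOf_lifted_dist_le x (‖x‖ ^ 2) (δ ^ 2)) hp
    rintro _ ⟨y, hy, rfl⟩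
    have h := pow_le_pow_left₀ dist_nonneg (hdiam y hy x hx) 2
    rw [dist_eq_norm, norm_sub_sq_real, real_inner_comm] at h
    exact h
  have h2 : p.2 - 2 * ⟪p.1, p.1⟫ + p.2 ≤ δ ^ 2 := by
    refine convexHull_min ?_ (convex_setOf_lifted_dist_le p.1 p.2 (δ ^ 2)) hp
    rintro _ ⟨y, hy, rfl⟩
    have h := h1 y hy
    rw [real_inner_comm] at h
    simp only [paraboloidLift, Set.mem_ofPred_eq]
    linarith
  rw [real_inner_self_eq_norm_sq] at h2
  linarith

theorem dist_sq_le_of_isMaxOn {S : Set E} {p : E × ℝ}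
    (hp : p ∈ convexHull ℝ (paraboloidLift '' S))
    (hmax : IsMaxOn (fun q : E × ℝ => q.2 - ‖q.1‖ ^ 2) (convexHull ℝ (paraboloidLift '' S)) p)
    {x : E} (hx : x ∈ S) : ‖x - p.1‖ ^ 2 ≤ p.2 - ‖p.1‖ ^ 2 := by
  have hxK := subset_convexHull ℝ _ (Set.mem_image_of_mem paraboloidLift hx)
  have hV : 0 ≤ p.2 - ‖p.1‖ ^ 2 := by
    have h := hmax hxK
    simpa [paraboloidLift] using h
  have key : ∀ t : ℝ, 0 < t → t ≤ 1 → (1 - t) * ‖x - p.1‖ ^ 2 ≤ p.2 - ‖p.1‖ ^ 2 := by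
    intro t ht ht1
    have h := hmax ((convex_convexHull ℝ _) hp hxK (sub_nonneg.2 ht1) ht.le (by ring))
    simp only [Set.mem_ofPred_eq, paraboloidLift, Prod.fst_add, Prod.snd_add, Prod.smul_fst,
      Prod.smul_snd, smul_eq_mul, norm_add_sq_real, norm_smul, mul_pow, Real.norm_eq_abs, sq_abs,
      real_inner_smul_left, real_inner_smul_right] at h
    rw [norm_sub_sq_real, real_inner_comm]
    refine le_of_mul_le_mul_left ?_ ht
    linarith
  by_contra! hlt
  have hA : 0 < ‖x - p.1‖ ^ 2 := hV.trans_lt hlt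
  -- This `t` makes `(1 - t) ‖x - c‖²` the midpoint of `V` and `‖x - c‖²`, which exceeds `V`.
  have h := key ((‖x - p.1‖ ^ 2 - (p.2 - ‖p.1‖ ^ 2)) / (2 * ‖x - p.1‖ ^ 2))
    (div_pos (by linarith) (by linarith)) ((div_le_one (by linarith)).2 (by linarith))
  have e : (1 - (‖x - p.1‖ ^ 2 - (p.2 - ‖p.1‖ ^ 2)) / (2 * ‖x - p.1‖ ^ 2)) * ‖x - p.1‖ ^ 2
      = (‖x - p.1‖ ^ 2 + (p.2 - ‖p.1‖ ^ 2)) / 2 := by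
    generalize ‖x - p.1‖ ^ 2 = A at hA
    field_simp
    ring
  linarith

end Lift

/-- Jung-type enclosing ball estimate: a finite nonempty set of points in `ℝ^d` of
diameter at most `δ` is contained in a closed ball of radius `δ/√2`. -/
theorem enclosing_ball_of_diameter {d : ℕ}
    (S : Finset (EuclideanSpace ℝ (Fin d))) (hS : S.Nonempty)
    (δ : ℝ) (hδ : 0 ≤ δ)
    (hdiam : ∀ x ∈ S, ∀ y ∈ S, dist x y ≤ δ) :
    ∃ c : EuclideanSpace ℝ (Fin d), ∀ x ∈ S, dist x c ≤ δ / Real.sqrt 2 := by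
  have hK := (S.finite_toSet.image paraboloidLift).isCompact_convexHull ℝ
  have hne : (convexHull ℝ (paraboloidLift '' (S : Set (EuclideanSpace ℝ (Fin d))))).Nonempty :=
    (hS.to_set.image _).convexHull
  obtain ⟨p, hp, hmax⟩ := hK.exists_isMaxOn hne
    (f := fun q => q.2 - ‖q.1‖ ^ 2) (by fun_prop)
  refine ⟨p.1, fun x hx => ?_⟩
  have h1 := dist_sq_le_of_isMaxOn hp hmax (Finset.mem_coe.2 hx)
  have h2 := variance_le_of_mem_convexHull hdiam hp
  rw [dist_eq_norm]
  refine le_of_sq_le_sq ?_ (by positivity)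
  rw [div_pow, Real.sq_sqrt zero_le_two]
  exact h1.trans h2
end

section
/- Let X be a set of points in Euclidean space ℝ^d and let δ ≥ 0. For r ≥ 0, define the Rips complex R_r(X) as the collection of finite nonempty subsets σ ⊆ X such that dist(x, y) ≤ r for all x, y ∈ σ, and define the Čech complex C_r(X) as the collection of finite nonempty subsets σ ⊆ X such that there exists c ∈ ℝ^d with dist(x, c) ≤ r for all x ∈ σ. Then R_δ(X) ⊆ C_{δ/√2}(X) ⊆ R_{δ√2}(X). -/
/-- The Vietoris–Rips complex of `X ⊆ ℝ^d` at scale `r`: the finite nonempty subsets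
of `X` of diameter at most `r`. -/
def ripsComplex {d : ℕ} (X : Set (EuclideanSpace ℝ (Fin d))) (r : ℝ) :
    Set (Finset (EuclideanSpace ℝ (Fin d))) :=
  {σ | σ.Nonempty ∧ ↑σ ⊆ X ∧ ∀ x ∈ σ, ∀ y ∈ σ, dist x y ≤ r}

/-- The Čech complex of `X ⊆ ℝ^d` at scale `r`: the finite nonempty subsets of `X`
contained in some closed ball of radius `r`. -/
def cechComplex {d : ℕ} (X : Set (EuclideanSpace ℝ (Fin d))) (r : ℝ) :
    Set (Finset (EuclideanSpace ℝ (Fin d))) :=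
  {σ | σ.Nonempty ∧ ↑σ ⊆ X ∧
    ∃ c : EuclideanSpace ℝ (Fin d), ∀ x ∈ σ, dist x c ≤ r}

/-!
The second inclusion is the triangle inequality, since `2 * (δ / √2) = δ * √2`. The first is the
dimension-free form of Jung's theorem: a finite set of diameter at most `δ` lies in a ball of
radius `δ / √2`.

The centre is found as a weighted mean. For weights `w` in the standard simplex put
`c = ∑ w i • x i` and let `V(w) = ∑ w i ‖x i‖² - ‖c‖²` be the variance. By compactness some `w`
maximizes `V`. Moving `w` towards the `k`-th vertex cannot increase `V`, which to first order says
`‖x k - c‖² ≤ V`. The parallel axis identity `V + ‖x k - c‖² = ∑ w i ‖x i - x k‖²` bounds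
`V + ‖x k - c‖²` by `δ²`, so `2 ‖x k - c‖² ≤ δ²` for every `k`.
-/

/-- The variance of the points `x i` under the weights `w`. -/
noncomputable def weightedVariance {ι E : Type*} [Fintype ι] [NormedAddCommGroup E]
    [InnerProductSpace ℝ E] (x : ι → E) (w : ι → ℝ) : ℝ :=
  ∑ i, w i * ‖x i‖ ^ 2 - ‖∑ i, w i • x i‖ ^ 2

/-- The parallel axis identity. -/
lemma weightedVariance_add_sq {ι E : Type*} [Fintype ι] [NormedAddCommGroup E]
    [InnerProductSpace ℝ E] (x : ι → E) (w : ι → ℝ) (hw : ∑ i, w i = 1) (y : E) :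
    weightedVariance x w + ‖y - ∑ i, w i • x i‖ ^ 2 = ∑ i, w i * ‖x i - y‖ ^ 2 := by
  have hsum : ∑ i, w i * ‖x i - y‖ ^ 2
      = ∑ i, w i * ‖x i‖ ^ 2 - 2 * inner ℝ (∑ i, w i • x i) y + ‖y‖ ^ 2 := by
    rw [sum_inner, Finset.mul_sum]
    calc ∑ i, w i * ‖x i - y‖ ^ 2
        = ∑ i, (w i * ‖x i‖ ^ 2 - 2 * inner ℝ (w i • x i) y + w i * ‖y‖ ^ 2) := by
          refine Finset.sum_congr rfl fun i _ => ?_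
          rw [norm_sub_sq_real, real_inner_smul_left]
          ring
      _ = _ := by
          rw [Finset.sum_add_distrib, Finset.sum_sub_distrib, ← Finset.sum_mul, hw, one_mul]
  rw [hsum, weightedVariance, norm_sub_sq_real, real_inner_comm]
  ring

/-- The variance along the segment from the weights `w` to the `k`-th vertex of the simplex. -/
lemma weightedVariance_segment {ι E : Type*} [Fintype ι] [DecidableEq ι] [NormedAddCommGroup E]
    [InnerProductSpace ℝ E] (x : ι → E) (w : ι → ℝ) (k : ι) (t : ℝ) :
    weightedVariance x ((1 - t) • w + t • Pi.single k 1)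
      = (1 - t) * weightedVariance x w + t * (1 - t) * ‖x k - ∑ i, w i • x i‖ ^ 2 := by
  have hsq : ∑ i, ((1 - t) • w + t • Pi.single k (1 : ℝ) : ι → ℝ) i * ‖x i‖ ^ 2
      = (1 - t) * ∑ i, w i * ‖x i‖ ^ 2 + t * ‖x k‖ ^ 2 := by
    simp [add_mul, Finset.sum_add_distrib, Finset.mul_sum, mul_assoc, Pi.single_apply]
  have hmean : ∑ i, ((1 - t) • w + t • Pi.single k (1 : ℝ) : ι → ℝ) i • x i
      = (1 - t) • ∑ i, w i • x i + t • x k := by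
    simp [add_smul, Finset.sum_add_distrib, Finset.smul_sum, mul_smul, Pi.single_apply]
  rw [weightedVariance, weightedVariance, hsq, hmean, norm_add_sq_real, norm_sub_sq_real,
    norm_smul, norm_smul, real_inner_smul_left, real_inner_smul_right, mul_pow, mul_pow,
    Real.norm_eq_abs, Real.norm_eq_abs, sq_abs, sq_abs, real_inner_comm (x k)]
  ring

/-- The dimension-free form of Jung's theorem for finite families. -/
lemma exists_center_two_mul_sq_le {ι E : Type*} [Fintype ι] [Nonempty ι] [NormedAddCommGroup E]
    [InnerProductSpace ℝ E] (x : ι → E) (δ : ℝ) (hx : ∀ i j, ‖x i - x j‖ ≤ δ) :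
    ∃ c : E, ∀ k, 2 * ‖x k - c‖ ^ 2 ≤ δ ^ 2 := by
  classical
  have hcont : Continuous (weightedVariance x) := by
    unfold weightedVariance
    fun_prop
  obtain ⟨w, hw, hmax⟩ := (isCompact_stdSimplex ℝ ι).exists_isMaxOn
    ⟨_, single_mem_stdSimplex ℝ (Classical.arbitrary ι)⟩ hcont.continuousOn
  refine ⟨∑ i, w i • x i, fun k => ?_⟩
  have hle : ‖x k - ∑ i, w i • x i‖ ^ 2 ≤ weightedVariance x w := by
    -- Stationarity: every step `0 < t < 1` towards vertex `k` gives `(1 - t) * D ≤ V`; let `t → 0`.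
    have hstep : ∀ t : ℝ, 0 < t → t < 1 →
        (1 - t) * ‖x k - ∑ i, w i • x i‖ ^ 2 ≤ weightedVariance x w := by
      intro t h0 h1
      have hmem : (1 - t) • w + t • Pi.single k (1 : ℝ) ∈ stdSimplex ℝ ι :=
        convex_stdSimplex ℝ ι hw (single_mem_stdSimplex ℝ k) (by linarith) h0.le (by ring)
      have hV : weightedVariance x ((1 - t) • w + t • Pi.single k (1 : ℝ))
          ≤ weightedVariance x w := hmax hmem
      rw [weightedVariance_segment] at hV
      refine le_of_mul_le_mul_left ?_ h0
      linarith
    have hlim : Filter.Tendsto (fun t : ℝ => (1 - t) * ‖x k - ∑ i, w i • x i‖ ^ 2)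
        (nhdsWithin 0 (Set.Ioi 0)) (nhds ((1 - 0) * ‖x k - ∑ i, w i • x i‖ ^ 2)) :=
      (Continuous.tendsto (by fun_prop) 0).mono_left nhdsWithin_le_nhds
    rw [sub_zero, one_mul] at hlim
    refine le_of_tendsto hlim ?_
    filter_upwards [Ioo_mem_nhdsGT (zero_lt_one' ℝ)] with t ht using hstep t ht.1 ht.2
  have haxis := weightedVariance_add_sq x w hw.2 (x k)
  have hdiam : ∑ i, w i * ‖x i - x k‖ ^ 2 ≤ δ ^ 2 := by
    calc ∑ i, w i * ‖x i - x k‖ ^ 2 ≤ ∑ i, w i * δ ^ 2 := by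
          refine Finset.sum_le_sum fun i _ => mul_le_mul_of_nonneg_left ?_ (hw.1 i)
          exact pow_le_pow_left₀ (norm_nonneg _) (hx i k) 2
      _ = δ ^ 2 := by rw [← Finset.sum_mul, hw.2, one_mul]
  linarith

/-- The Rips–Čech interleaving of de Silva and Ghrist:
`R_δ(X) ⊆ C_{δ/√2}(X) ⊆ R_{δ√2}(X)`. -/
theorem rips_cech_interleaving {d : ℕ}
    (X : Set (EuclideanSpace ℝ (Fin d))) (δ : ℝ) (hδ : 0 ≤ δ) :
    ripsComplex X δ ⊆ cechComplex X (δ / Real.sqrt 2) ∧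
    cechComplex X (δ / Real.sqrt 2) ⊆ ripsComplex X (δ * Real.sqrt 2) := by
  constructor
  · rintro σ ⟨hne, hX, hdiam⟩
    refine ⟨hne, hX, ?_⟩
    have : Nonempty σ := hne.to_subtype
    obtain ⟨c, hc⟩ := exists_center_two_mul_sq_le (fun i : σ => (i : EuclideanSpace ℝ (Fin d))) δ
      (fun i j => by simpa [dist_eq_norm] using hdiam i i.2 j j.2)
    refine ⟨c, fun x hx => ?_⟩
    rw [dist_eq_norm]
    refine (sq_le_sq₀ (norm_nonneg _) (by positivity)).mp ?_
    rw [div_pow, Real.sq_sqrt zero_le_two]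
    linarith [hc ⟨x, hx⟩]
  · rintro σ ⟨hne, hX, c, hc⟩
    refine ⟨hne, hX, fun x hx y hy => ?_⟩
    have hscale : δ / Real.sqrt 2 + δ / Real.sqrt 2 = δ * Real.sqrt 2 := by
      have h2 : Real.sqrt 2 ^ 2 = 2 := Real.sq_sqrt zero_le_two
      field_simp
      rw [h2]
      ring
    calc dist x y ≤ dist x c + dist y c := dist_triangle_right x y c
      _ ≤ δ / Real.sqrt 2 + δ / Real.sqrt 2 := add_le_add (hc x hx) (hc y hy)
      _ = δ * Real.sqrt 2 := hscale
end

section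
/- Fix integers N ≥ 2 and s ≥ 1, and fix real numbers p_{kl} for 1 ≤ k, l ≤ N with k ≠ l, satisfying p_{kl} > 0, p_{kl} = p_{lk}, and Σ_{k≠l} p_{kl} = 1. For u = (u₁, …, u_N) ∈ (ℝ^s)^N, define d_{kl}(u) = ‖u_k − u_l‖², Z(u) = Σ_{k≠l} (1 + d_{kl}(u))⁻¹, q_{kl}(u) = (1 + d_{kl}(u))⁻¹ / Z(u), and the Kullback–Leibler objective L(u) = Σ_{k≠l} p_{kl} log(p_{kl} / q_{kl}(u)). Then L is differentiable, and for each index k its partial gradient with respect to the block u_k is ∂L/∂u_k = 4 Σ_{l≠k} (p_{kl} − q_{kl}(u)) (1 + d_{kl}(u))⁻¹ (u_k − u_l). -/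
/-!
Since `∑ p = 1`, the objective splits as
`L(u) = ∑_{a≠b} p_{ab} log p_{ab} + ∑_{a≠b} p_{ab} log (1 + d_{ab}(u)) + log Z(u)` (`tsneL_eq`).
Differentiating in a direction `h` collects both non-constant terms into
`dL(u) h = ∑_{a≠b} c_{ab} ⟪u_a - u_b, h_a - h_b⟫` with `c_{ab} = 2 (p_{ab} - q_{ab}) (1 + d_{ab})⁻¹`
(`tsneL_hasFDerivAt`, `tsneDeriv_apply`).
Each summand is symmetric in `(a, b)`, so this is `2 ∑_{a≠b} c_{ab} ⟪u_a - u_b, h_a⟫`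
(`sum_offdiag_symmetrize`); for `h` supported on the block `k` only the row `a = k` survives, which
gives the factor `4` and the asserted gradient.
-/

open Finset

/-- Squared Euclidean distance `d_{kl}(u) = ‖u_k − u_l‖²` between the low-dimensional
points `u_k` and `u_l`. -/
noncomputable def tsneD {N s : ℕ} (u : Fin N → EuclideanSpace ℝ (Fin s))
    (k l : Fin N) : ℝ :=
  ‖u k - u l‖ ^ 2

/-- Normalizing constant `Z(u) = Σ_{k≠l} (1 + d_{kl}(u))⁻¹`. -/
noncomputable def tsneZ {N s : ℕ} (u : Fin N → EuclideanSpace ℝ (Fin s)) : ℝ :=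
  ∑ k, ∑ l ∈ univ.erase k, (1 + tsneD u k l)⁻¹

/-- Student-t low-dimensional affinities `q_{kl}(u) = (1 + d_{kl}(u))⁻¹ / Z(u)`. -/
noncomputable def tsneQ {N s : ℕ} (u : Fin N → EuclideanSpace ℝ (Fin s))
    (k l : Fin N) : ℝ :=
  (1 + tsneD u k l)⁻¹ / tsneZ u

/-- The t-SNE objective: the Kullback–Leibler divergence
`L(u) = Σ_{k≠l} p_{kl} log(p_{kl} / q_{kl}(u))`. -/
noncomputable def tsneL {N s : ℕ} (p : Fin N → Fin N → ℝ)
    (u : Fin N → EuclideanSpace ℝ (Fin s)) : ℝ :=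
  ∑ k, ∑ l ∈ univ.erase k, p k l * Real.log (p k l / tsneQ u k l)

lemma sum_offdiag_comm {N : ℕ} (F : Fin N → Fin N → ℝ) :
    ∑ a, ∑ b ∈ univ.erase a, F a b = ∑ a, ∑ b ∈ univ.erase a, F b a := by
  refine Finset.sum_comm' fun a b => ?_
  simp [ne_comm]

/-- For symmetric weights `c`, the pairing with differences `h a - h b` folds into twice the pairing
with the first endpoint, since `u a - u b` is antisymmetric. -/
lemma sum_offdiag_symmetrize {N s : ℕ} (c : Fin N → Fin N → ℝ)
    (hc : ∀ a b, a ≠ b → c a b = c b a) (u h : Fin N → EuclideanSpace ℝ (Fin s)) :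
    ∑ a, ∑ b ∈ univ.erase a, c a b * inner ℝ (u a - u b) (h a - h b)
      = 2 * ∑ a, ∑ b ∈ univ.erase a, c a b * inner ℝ (u a - u b) (h a) := by
  have h1 : ∑ a, ∑ b ∈ univ.erase a, c a b * inner ℝ (u a - u b) (h a - h b)
      = ∑ a, ∑ b ∈ univ.erase a, c a b * inner ℝ (u a - u b) (h a)
        - ∑ a, ∑ b ∈ univ.erase a, c a b * inner ℝ (u a - u b) (h b) := by
    simp only [inner_sub_right, mul_sub, Finset.sum_sub_distrib]
  have h2 : ∑ a, ∑ b ∈ univ.erase a, c a b * inner ℝ (u a - u b) (h b)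
      = -∑ a, ∑ b ∈ univ.erase a, c a b * inner ℝ (u a - u b) (h a) := by
    rw [sum_offdiag_comm]
    simp only [← Finset.sum_neg_distrib]
    refine Finset.sum_congr rfl fun a _ => Finset.sum_congr rfl fun b hb => ?_
    rw [hc b a (Finset.ne_of_mem_erase hb), ← neg_sub (u a) (u b), inner_neg_left, mul_neg]
  rw [h1, h2]
  ring

lemma tsneD_comm {N s : ℕ} (u : Fin N → EuclideanSpace ℝ (Fin s)) (a b : Fin N) :
    tsneD u a b = tsneD u b a := by
  simp only [tsneD, norm_sub_rev]

lemma one_add_tsneD_pos {N s : ℕ} (u : Fin N → EuclideanSpace ℝ (Fin s)) (a b : Fin N) :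
    0 < 1 + tsneD u a b := by
  unfold tsneD
  positivity

lemma tsneZ_pos {N s : ℕ} (hN : 2 ≤ N) (u : Fin N → EuclideanSpace ℝ (Fin s)) :
    0 < tsneZ u := by
  have : Nontrivial (Fin N) := Fin.nontrivial_iff_two_le.mpr hN
  unfold tsneZ
  refine Finset.sum_pos (fun a _ => Finset.sum_pos (fun b _ => ?_) ?_) univ_nonempty
  · exact inv_pos.mpr (one_add_tsneD_pos u a b)
  · obtain ⟨b, hb⟩ := exists_ne a
    exact ⟨b, by simp [hb]⟩

lemma tsneL_eq {N s : ℕ} (hN : 2 ≤ N) (p : Fin N → Fin N → ℝ)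
    (hp_pos : ∀ k l, k ≠ l → 0 < p k l)
    (hp_sum : ∑ k, ∑ l ∈ univ.erase k, p k l = 1)
    (u : Fin N → EuclideanSpace ℝ (Fin s)) :
    tsneL p u = (∑ a, ∑ b ∈ univ.erase a, p a b * Real.log (p a b))
      + (∑ a, ∑ b ∈ univ.erase a, p a b * Real.log (1 + tsneD u a b))
      + Real.log (tsneZ u) := by
  have hZ : Real.log (tsneZ u)
      = ∑ a, ∑ b ∈ univ.erase a, p a b * Real.log (tsneZ u) := by
    simp only [← Finset.sum_mul, hp_sum, one_mul]
  rw [hZ, tsneL]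
  simp only [← Finset.sum_add_distrib]
  refine Finset.sum_congr rfl fun a _ => Finset.sum_congr rfl fun b hb => ?_
  have hp := hp_pos a b (Finset.ne_of_mem_erase hb).symm
  have hd := one_add_tsneD_pos u a b
  have hz := tsneZ_pos hN u
  rw [tsneQ, Real.log_div hp.ne' (by positivity), Real.log_div (by positivity) hz.ne',
    Real.log_inv]
  ring

/-- The differential of `d_{ab}` at `u`, namely `h ↦ 2 ⟪u_a - u_b, h_a - h_b⟫`. -/
noncomputable def tsneDDeriv {N s : ℕ} (u : Fin N → EuclideanSpace ℝ (Fin s)) (a b : Fin N) :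
    (Fin N → EuclideanSpace ℝ (Fin s)) →L[ℝ] ℝ :=
  (2 : ℝ) • (innerSL ℝ (u a - u b)).comp
    (ContinuousLinearMap.proj (R := ℝ) (φ := fun _ => EuclideanSpace ℝ (Fin s)) a
      - ContinuousLinearMap.proj b)

lemma tsneDDeriv_apply {N s : ℕ} (u h : Fin N → EuclideanSpace ℝ (Fin s)) (a b : Fin N) :
    tsneDDeriv u a b h = 2 * inner ℝ (u a - u b) (h a - h b) := by
  simp [tsneDDeriv, inner_sub_left, inner_sub_right]

lemma tsneD_hasFDerivAt {N s : ℕ} (u : Fin N → EuclideanSpace ℝ (Fin s)) (a b : Fin N) :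
    HasFDerivAt (fun v => tsneD v a b) (tsneDDeriv u a b) u := by
  have h := (ContinuousLinearMap.proj (R := ℝ) (φ := fun _ => EuclideanSpace ℝ (Fin s)) a
    - ContinuousLinearMap.proj b).hasFDerivAt (x := u)
  simpa [tsneD, tsneDDeriv, ← ofNat_smul_eq_nsmul ℝ] using h.norm_sq

/-- The differential of the objective at `u`: the contribution of `∑ p log (1 + d)` plus that of
`log Z`. -/
noncomputable def tsneDeriv {N s : ℕ} (p : Fin N → Fin N → ℝ)
    (u : Fin N → EuclideanSpace ℝ (Fin s)) : (Fin N → EuclideanSpace ℝ (Fin s)) →L[ℝ] ℝ :=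
  (∑ a, ∑ b ∈ univ.erase a, p a b • (1 + tsneD u a b)⁻¹ • tsneDDeriv u a b)
    + (tsneZ u)⁻¹ • ∑ a, ∑ b ∈ univ.erase a, (-((1 + tsneD u a b) ^ 2)⁻¹) • tsneDDeriv u a b

lemma tsneL_hasFDerivAt {N s : ℕ} (hN : 2 ≤ N) (p : Fin N → Fin N → ℝ)
    (hp_pos : ∀ k l, k ≠ l → 0 < p k l)
    (hp_sum : ∑ k, ∑ l ∈ univ.erase k, p k l = 1)
    (u : Fin N → EuclideanSpace ℝ (Fin s)) :
    HasFDerivAt (tsneL p) (tsneDeriv p u) u := by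
  have hD := fun a b => (tsneD_hasFDerivAt u a b).const_add 1
  have h1 : HasFDerivAt
      (fun v => ∑ a, ∑ b ∈ univ.erase a, p a b * Real.log (1 + tsneD v a b))
      (∑ a, ∑ b ∈ univ.erase a, p a b • (1 + tsneD u a b)⁻¹ • tsneDDeriv u a b) u :=
    HasFDerivAt.fun_sum fun a _ => HasFDerivAt.fun_sum fun b _ =>
      ((hD a b).log (one_add_tsneD_pos u a b).ne').const_mul _
  have hZ : HasFDerivAt (tsneZ : (Fin N → EuclideanSpace ℝ (Fin s)) → ℝ)
      (∑ a, ∑ b ∈ univ.erase a, (-((1 + tsneD u a b) ^ 2)⁻¹) • tsneDDeriv u a b) u :=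
    HasFDerivAt.fun_sum fun a _ => HasFDerivAt.fun_sum fun b _ =>
      (hasDerivAt_inv (one_add_tsneD_pos u a b).ne').comp_hasFDerivAt u (hD a b)
  have h := (h1.const_add (∑ a, ∑ b ∈ univ.erase a, p a b * Real.log (p a b))).add
    (hZ.log (tsneZ_pos hN u).ne')
  exact h.congr_of_eventuallyEq
    (Filter.Eventually.of_forall fun v => tsneL_eq hN p hp_pos hp_sum v)

lemma tsneDeriv_apply {N s : ℕ} (p : Fin N → Fin N → ℝ)
    (u h : Fin N → EuclideanSpace ℝ (Fin s)) :
    tsneDeriv p u h = ∑ a, ∑ b ∈ univ.erase a,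
      (2 * ((p a b - tsneQ u a b) * (1 + tsneD u a b)⁻¹)) * inner ℝ (u a - u b) (h a - h b) := by
  simp only [tsneDeriv, add_apply, smul_apply,
    _root_.sum_apply, tsneDDeriv_apply, smul_eq_mul, Finset.mul_sum,
    ← Finset.sum_add_distrib]
  refine Finset.sum_congr rfl fun a _ => Finset.sum_congr rfl fun b _ => ?_
  rw [tsneQ, ← inv_pow]
  ring

/-- The t-SNE objective is differentiable and its partial gradient with respect to the
block `u_k` is `4 Σ_{l≠k} (p_{kl} − q_{kl}(u)) (1 + d_{kl}(u))⁻¹ (u_k − u_l)`. -/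
theorem tsne_gradient {N s : ℕ} (hN : 2 ≤ N) (hs : 1 ≤ s)
    (p : Fin N → Fin N → ℝ)
    (hp_pos : ∀ k l, k ≠ l → 0 < p k l)
    (hp_symm : ∀ k l, k ≠ l → p k l = p l k)
    (hp_sum : ∑ k, ∑ l ∈ univ.erase k, p k l = 1) :
    Differentiable ℝ (tsneL (s := s) p) ∧
    ∀ (u : Fin N → EuclideanSpace ℝ (Fin s)) (k : Fin N),
      gradient (fun z => tsneL p (Function.update u k z)) (u k)
        = (4 : ℝ) • ∑ l ∈ univ.erase k,
            ((p k l - tsneQ u k l) * (1 + tsneD u k l)⁻¹) • (u k - u l) := by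
  have hL := tsneL_hasFDerivAt (s := s) hN p hp_pos hp_sum
  refine ⟨fun u => (hL u).differentiableAt, fun u k => HasGradientAt.gradient ?_⟩
  have hc : HasFDerivAt (fun z => tsneL p (Function.update u k z))
      ((tsneDeriv p u).comp
        (ContinuousLinearMap.single ℝ (fun _ => EuclideanSpace ℝ (Fin s)) k)) (u k) := by
    have hu : HasFDerivAt (tsneL p) (tsneDeriv p u) (Function.update u k (u k)) := by
      rw [Function.update_eq_self]
      exact hL u
    refine hu.comp (u k) ((hasFDerivAt_update (𝕜 := ℝ) u (u k)).congr_fderiv ?_)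
    ext1 v
    funext j
    rcases eq_or_ne j k with rfl | hj
    · simp
    · simp [hj]
  rw [hasGradientAt_iff_hasFDerivAt]
  refine hc.congr_fderiv (ContinuousLinearMap.ext fun v => Eq.symm ?_)
  rw [InnerProductSpace.toDual_apply_apply, ContinuousLinearMap.comp_apply, tsneDeriv_apply,
    sum_offdiag_symmetrize]
  -- The direction is supported on the block `k`, so only the row `a = k` contributes.
  · rw [Finset.sum_eq_single (M := ℝ) k]
    · simp only [ContinuousLinearMap.single_apply, Pi.single_eq_same, inner_smul_left, sum_inner,
        Finset.mul_sum, conj_trivial]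
      refine Finset.sum_congr rfl fun b _ => ?_
      ring
    · intro a _ ha
      simp [ContinuousLinearMap.single_apply, Pi.single_eq_of_ne ha]
    · simp
  · intro a b hab
    rw [hp_symm a b hab, tsneQ, tsneQ, tsneD_comm u a b]
end
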